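/- Let n ≥ 2k, let Ω₁ ⊂ ℝⁿ be a bounded convex open set with smooth boundary, fix x₀ ∈ Ω₁ and M > M₁(Ω₁), and choose ε₀ > 0 with B̄_{ε₀}(x₀) ⊂ Ω₁. For ε ∈ (0, ε₀) let u^ε be the unique strictly k-convex solution of σ_k(D²u^ε) = 1 in Ω₁ \ B̄_ε(x₀), u^ε = 0 on ∂Ω₁, u^ε = −M on ∂B_ε(x₀), and let ũ^ε be its extension by −M on B̄_ε(x₀). Then as ε → 0, ũ^ε converges to ψ uniformly on every compact subset of Ω₁ \ {x₀}, where ψ is the unique strictly k-convex solution of σ_k(D²ψ) = 1 in Ω₁ with ψ = 0 on ∂Ω₁. -/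

import Mathlib

open Set Metric Filter Topology Bornology
open scoped RealInnerProductSpace

noncomputable section

/-- Euclidean `n`-space. -/
abbrev Euc (n : ℕ) := EuclideanSpace ℝ (Fin n)

/-- The `k`-th elementary symmetric polynomial of a vector `lam ∈ ℝⁿ`. -/
def esymmVec {n : ℕ} (k : ℕ) (lam : Fin n → ℝ) : ℝ :=
  ∑ S ∈ Finset.powersetCard k (Finset.univ : Finset (Fin n)), ∏ i ∈ S, lam i

/-- `σ_k(A)`: the `k`-th elementary symmetric polynomial of the eigenvalues of a
symmetric matrix `A` (junk value `0` if `A` is not symmetric). -/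
noncomputable def sigmaMat {n : ℕ} (k : ℕ) (A : Matrix (Fin n) (Fin n) ℝ) : ℝ := by
  classical exact if h : A.IsHermitian then esymmVec k h.eigenvalues else 0

/-- The eigenvalues of the symmetric matrix `A` lie in the Gårding cone
`Γ_k = {λ : σ_j(λ) > 0, j = 1, …, k}`. -/
def InGardingCone {n : ℕ} (k : ℕ) (A : Matrix (Fin n) (Fin n) ℝ) : Prop :=
  ∃ h : A.IsHermitian, ∀ j : ℕ, 1 ≤ j → j ≤ k → 0 < esymmVec j h.eigenvalues

/-- The Hessian matrix of `u` at `x`, with derivatives taken within the set `s`. -/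
noncomputable def hessianWithin {n : ℕ} (u : Euc n → ℝ) (s : Set (Euc n)) (x : Euc n) :
    Matrix (Fin n) (Fin n) ℝ :=
  fun i j => iteratedFDerivWithin ℝ 2 u s x
    ![EuclideanSpace.single i (1:ℝ), EuclideanSpace.single j (1:ℝ)]

/-- The Hessian matrix `D²u(x)` of `u` at `x`. -/
noncomputable def hessian {n : ℕ} (u : Euc n → ℝ) (x : Euc n) : Matrix (Fin n) (Fin n) ℝ :=
  fun i j => iteratedFDeriv ℝ 2 u x
    ![EuclideanSpace.single i (1:ℝ), EuclideanSpace.single j (1:ℝ)]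

/-- Operator norm of the Hessian matrix of `u` at `x` (derivatives within `s`). -/
noncomputable def hessOpNormWithin {n : ℕ} (u : Euc n → ℝ) (s : Set (Euc n)) (x : Euc n) : ℝ :=
  ‖Matrix.toEuclideanCLM (𝕜 := ℝ) (hessianWithin u s x)‖

/-- A set has smooth boundary: it is the sublevel set of a smooth defining function
with nonvanishing differential on the boundary. -/
def HasSmoothBoundary {n : ℕ} (Ω : Set (Euc n)) : Prop :=
  ∃ ρ : Euc n → ℝ, ContDiff ℝ (⊤ : ℕ∞) ρ ∧ Ω = {x | ρ x < 0} ∧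
    ∀ x ∈ frontier Ω, fderiv ℝ ρ x ≠ 0

/-- `c_{n,k} = (C(n,k))^{1/k}` where `C(n,k)` is the binomial coefficient. -/
noncomputable def cnk (n k : ℕ) : ℝ := (n.choose k : ℝ) ^ ((1:ℝ)/(k:ℝ))

/-- The radially symmetric subsolution `|x - x₀|²/(2c_{n,k}) − ε²/(2c_{n,k}) − M`. -/
noncomputable def underSol {n : ℕ} (k : ℕ) (x₀ : Euc n) (ε M : ℝ) (x : Euc n) : ℝ :=
  ‖x - x₀‖^2 / (2 * cnk n k) - ε^2 / (2 * cnk n k) - M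

/-- The closed ring `Ω̄^ε = closure (Ω₁ \ B̄_ε(x₀))`. -/
def ringSet {n : ℕ} (Ω₁ : Set (Euc n)) (x₀ : Euc n) (ε : ℝ) : Set (Euc n) :=
  closure (Ω₁ \ closedBall x₀ ε)

/-- `u` is a strictly `k`-convex solution of problem (2.1):
`σ_k(D²u) = 1` in `Ω^ε = Ω₁ \ B̄_ε(x₀)`, `u = 0` on `∂Ω₁`, `u = −M` on `∂B_ε(x₀)`,
with `u ∈ C²(Ω̄^ε)`. -/
def IsSol {n : ℕ} (k : ℕ) (Ω₁ : Set (Euc n)) (x₀ : Euc n) (ε M : ℝ) (u : Euc n → ℝ) : Prop :=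
  ContDiffOn ℝ 2 u (ringSet Ω₁ x₀ ε) ∧
  (∀ x ∈ Ω₁ \ closedBall x₀ ε,
      InGardingCone k (hessianWithin u (ringSet Ω₁ x₀ ε) x) ∧
      sigmaMat k (hessianWithin u (ringSet Ω₁ x₀ ε) x) = 1) ∧
  (∀ x ∈ frontier Ω₁, u x = 0) ∧
  (∀ x ∈ sphere x₀ ε, u x = -M)

/-- `ψ` is a strictly `k`-convex solution of problem (2.2):
`σ_k(D²ψ) = 1` in `Ω₁`, `ψ = 0` on `∂Ω₁`, with `ψ ∈ C^∞(Ω̄₁)`. -/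
def IsSol22 {n : ℕ} (k : ℕ) (Ω₁ : Set (Euc n)) (ψ : Euc n → ℝ) : Prop :=
  ContDiffOn ℝ (⊤ : ℕ∞) ψ (closure Ω₁) ∧
  (∀ x ∈ Ω₁, InGardingCone k (hessianWithin ψ (closure Ω₁) x) ∧
      sigmaMat k (hessianWithin ψ (closure Ω₁) x) = 1) ∧
  (∀ x ∈ frontier Ω₁, ψ x = 0)

/-- `u` is a strictly `k`-convex solution of the Dirichlet problem on the convex ring
`Ω = Ω₁ \ Ω̄₂`: `σ_k(D²u) = 1` in `Ω`, `u = 0` on `∂Ω₁`, `u = −M` on `∂Ω₂`,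
with `u ∈ C²(Ω̄)`. -/
def IsSolRing {n : ℕ} (k : ℕ) (Ω₁ Ω₂ : Set (Euc n)) (M : ℝ) (u : Euc n → ℝ) : Prop :=
  ContDiffOn ℝ 2 u (closure (Ω₁ \ closure Ω₂)) ∧
  (∀ x ∈ Ω₁ \ closure Ω₂,
      InGardingCone k (hessianWithin u (closure (Ω₁ \ closure Ω₂)) x) ∧
      sigmaMat k (hessianWithin u (closure (Ω₁ \ closure Ω₂)) x) = 1) ∧
  (∀ x ∈ frontier Ω₁, u x = 0) ∧
  (∀ x ∈ frontier Ω₂, u x = -M)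

/-- The extension `ũ` of `u`, equal to `−M` on the closed ball `B̄_ε(x₀)`. -/
noncomputable def extendBy {n : ℕ} (u : Euc n → ℝ) (x₀ : Euc n) (ε M : ℝ) (x : Euc n) : ℝ := by
  classical exact if x ∈ closedBall x₀ ε then -M else u x

/-- The extension `ũ` of `u`, equal to `−M` on the set `Ω₂`. -/
noncomputable def extendOn {n : ℕ} (u : Euc n → ℝ) (Ω₂ : Set (Euc n)) (M : ℝ) (x : Euc n) : ℝ := by
  classical exact if x ∈ Ω₂ then -M else u x

/-- The quadratic polynomial with Hessian `A`, linear part `b` and constant term `c`. -/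
noncomputable def quadPoly {n : ℕ} (A : Matrix (Fin n) (Fin n) ℝ) (b : Euc n) (c : ℝ)
    (x : Euc n) : ℝ :=
  (∑ i, ∑ j, A i j * x i * x j) / 2 + ⟪b, x⟫ + c

/-!
On a ring `Ω₁ \ B̄_ε(x₀)` contained in `B̄_R(x₀)`, the comparison principle squeezes `u^ε` between
`ψ + L (log|x - x₀| - log R) / (log R - log ε)` and `ψ`, where `L` bounds `ψ + M`; letting `ε → 0`
gives convergence with the rate `O(1 / log(1/ε))`. The lower barrier is a subsolution because
`δ log|x - x₀|` has Hessian `τ (I - 2 ν ⊗ ν)` with `ν` a unit vector and `τ ≥ 0`, and adding such a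
matrix to `A ∈ Γ_k` does not decrease `σ_k` when `n ≥ 2k`. Writing `σ_k(A + τ I + c ν ⊗ ν)` in an
eigenbasis of `A` as a weighted average over the eigenvectors reduces this to the case where `ν` is
an eigenvector, which follows from Newton's inequalities.
-/

section Newton

open Polynomial

theorem splits_derivative {p : ℝ[X]} (hp : p.Splits) : (derivative p).Splits := by
  by_cases h0 : derivative p = 0
  · rw [h0]
    exact Splits.zero
  have hlt : (derivative p).natDegree < p.natDegree :=
    natDegree_derivative_lt fun h => h0 (derivative_of_natDegree_zero h)
  have hRolle := card_roots_le_derivative p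
  have hle := card_roots' (derivative p)
  rw [splits_iff_card_roots] at hp ⊢
  omega

theorem splits_iterate_derivative {p : ℝ[X]} (hp : p.Splits) (i : ℕ) :
    (derivative^[i] p).Splits := by
  induction i with
  | zero => exact hp
  | succ i ih =>
    rw [Function.iterate_succ_apply']
    exact splits_derivative ih

theorem natDegree_iterate_derivative_eq (p : ℝ[X]) (i : ℕ) :
    (derivative^[i] p).natDegree = p.natDegree - i := by
  induction i with
  | zero => simp
  | succ i ih => rw [Function.iterate_succ_apply', natDegree_derivative, ih, Nat.sub_sub]

theorem newton_coeff_zero_prod_X_sub_C (s : Multiset ℝ) :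
    2 * (s.card : ℝ) * ((s.map (X - C ·)).prod.coeff 0 * (s.map (X - C ·)).prod.coeff 2) ≤
      ((s.card : ℝ) - 1) * (s.map (X - C ·)).prod.coeff 1 ^ 2 := by
  induction s using Multiset.induction_on with
  | empty => simp [coeff_one]
  | cons a s ih =>
    rcases Nat.eq_zero_or_pos s.card with hs | hs
    · simp [Multiset.card_eq_zero.mp hs, coeff_C, coeff_X]
    have hd : (0 : ℝ) < s.card := by exact_mod_cast hs
    simp only [Multiset.map_cons, Multiset.prod_cons, Multiset.card_cons, sub_mul, coeff_sub,
      coeff_C_mul, coeff_X_mul, coeff_X_mul_zero, zero_sub, Nat.cast_add,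
      Nat.cast_one, add_sub_cancel_right]
    generalize (s.map (X - C ·)).prod.coeff 0 = q₀ at ih ⊢
    generalize (s.map (X - C ·)).prod.coeff 1 = q₁ at ih ⊢
    generalize (s.map (X - C ·)).prod.coeff 2 = q₂ at ih ⊢
    generalize (s.card : ℝ) = d at ih hd ⊢
    refine sub_nonneg.mp (nonneg_of_mul_nonneg_right ?_ hd)
    nlinarith [mul_nonneg (by positivity : 0 ≤ (d + 1) * a ^ 2) (sub_nonneg.mpr ih),
      sq_nonneg (d * q₀ + a * q₁)]

theorem newton_coeff_zero_of_splits {p : ℝ[X]} (hp : p.Splits) :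
    2 * (p.natDegree : ℝ) * (p.coeff 0 * p.coeff 2) ≤
      ((p.natDegree : ℝ) - 1) * p.coeff 1 ^ 2 := by
  have h := newton_coeff_zero_prod_X_sub_C p.roots
  rw [splits_iff_card_roots.mp hp] at h
  have hprod := hp.eq_prod_roots
  have hcoeff (j : ℕ) :
      p.coeff j = p.leadingCoeff * (p.roots.map (X - C ·)).prod.coeff j := by
    conv_lhs => rw [hprod, coeff_C_mul]
  rw [hcoeff 0, hcoeff 1, hcoeff 2]
  linear_combination p.leadingCoeff ^ 2 * h

theorem newton_coeff_of_splits {p : ℝ[X]} (hp : p.Splits) {i : ℕ} (hi : i ≤ p.natDegree) :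
    ((p.natDegree : ℝ) - i) * (i + 2) * (p.coeff i * p.coeff (i + 2)) ≤
      ((p.natDegree : ℝ) - i - 1) * (i + 1) * p.coeff (i + 1) ^ 2 := by
  have h := newton_coeff_zero_of_splits (splits_iterate_derivative hp i)
  have hdesc₁ : ((i + 1).descFactorial i : ℝ) = (i + 1) * i.factorial := by
    have := Nat.factorial_mul_descFactorial (Nat.le_add_right i 1)
    rw [Nat.add_sub_cancel_left, Nat.factorial_one, one_mul, Nat.factorial_succ] at this
    exact_mod_cast this
  have hdesc₂ : 2 * ((i + 2).descFactorial i : ℝ) = (i + 2) * ((i + 1) * i.factorial) := by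
    have := Nat.factorial_mul_descFactorial (Nat.le_add_right i 2)
    rw [Nat.add_sub_cancel_left, Nat.factorial_two, Nat.factorial_succ, Nat.factorial_succ] at this
    exact_mod_cast this
  simp only [coeff_iterate_derivative, natDegree_iterate_derivative_eq, Nat.cast_sub hi, zero_add,
    Nat.descFactorial_self, nsmul_eq_mul, add_comm 1 i, add_comm 2 i, hdesc₁] at h
  have hfact : (0 : ℝ) < i.factorial := by exact_mod_cast i.factorial_pos
  refine le_of_mul_le_mul_left ?_ (by positivity : 0 < (i.factorial : ℝ) ^ 2 * (i + 1))
  linear_combination h - (p.natDegree - i) * i.factorial * p.coeff i * p.coeff (i + 2) * hdesc₂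

end Newton

section Esymm

theorem esymm_zero (s : Multiset ℝ) : s.esymm 0 = 1 := by
  simp [Multiset.esymm]

theorem esymm_cons (a : ℝ) (s : Multiset ℝ) (j : ℕ) :
    (a ::ₘ s).esymm (j + 1) = s.esymm (j + 1) + a * s.esymm j := by
  simp only [Multiset.esymm, Multiset.powersetCard_cons, Multiset.map_add, Multiset.sum_add,
    Multiset.map_map, Function.comp_apply, Multiset.prod_cons, Multiset.sum_map_mul_left]

theorem esymm_eq_zero_of_card_lt {s : Multiset ℝ} {j : ℕ} (h : s.card < j) : s.esymm j = 0 := by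
  simp [Multiset.esymm, Multiset.powersetCard_eq_empty j h]

open Polynomial in
theorem newton_esymm (s : Multiset ℝ) (j : ℕ) :
    ((j : ℝ) + 2) * (s.card - j) * (s.esymm j * s.esymm (j + 2)) ≤
      ((j : ℝ) + 1) * (s.card - j - 1) * s.esymm (j + 1) ^ 2 := by
  rcases lt_or_ge s.card (j + 2) with h | h
  · rw [esymm_eq_zero_of_card_lt h, mul_zero, mul_zero]
    rcases Nat.lt_succ_iff_lt_or_eq.mp h with h' | h'
    · simp [esymm_eq_zero_of_card_lt h']
    · simp [h']
  obtain ⟨i, hi⟩ := Nat.exists_eq_add_of_le h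
  have hdeg : (s.map fun a => X + C a).prod.natDegree = s.card := by
    rw [natDegree_multiset_prod_of_monic _ (by simpa using fun a _ => monic_X_add_C a)]
    simp
  have hsplits : (s.map fun a => X + C a).prod.Splits :=
    Splits.multisetProd (by simp [Splits.X_add_C])
  have hnewton := newton_coeff_of_splits hsplits (i := i) (by omega)
  rw [hdeg, Multiset.prod_X_add_C_coeff s (by omega), Multiset.prod_X_add_C_coeff s (by omega),
    Multiset.prod_X_add_C_coeff s (by omega), hi, show j + 2 + i - i = j + 2 by omega,
    show j + 2 + i - (i + 1) = j + 1 by omega, show j + 2 + i - (i + 2) = j by omega] at hnewton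
  rw [hi]
  push_cast at hnewton ⊢
  linear_combination hnewton

theorem hasDerivAt_esymm_map_add (s : Multiset ℝ) (j : ℕ) (t : ℝ) :
    HasDerivAt (fun t => (s.map (· + t)).esymm (j + 1))
      ((s.card - j) * (s.map (· + t)).esymm j) t := by
  induction s using Multiset.induction_on generalizing j with
  | empty =>
    have hzero (j : ℕ) : (0 : Multiset ℝ).esymm (j + 1) = 0 := esymm_eq_zero_of_card_lt (by simp)
    cases j <;> simp [hzero, hasDerivAt_const]
  | cons a s ih =>
    simp only [Multiset.map_cons, esymm_cons, Multiset.card_cons]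
    cases j with
    | zero =>
      simp only [esymm_zero, mul_one]
      convert! (ih 0).add ((hasDerivAt_id t).const_add a) using 1
      simp [esymm_zero]
    | succ j =>
      convert! (ih (j + 1)).add (((hasDerivAt_id t).const_add a).mul (ih j)) using 1
      rw [esymm_cons]
      simp only [id]
      push_cast
      ring

theorem strictMonoOn_esymm_map_add {s : Multiset ℝ} {j : ℕ} (hj : j < s.card)
    (hpos : ∀ t : ℝ, 0 ≤ t → 0 < (s.map (· + t)).esymm j) :
    StrictMonoOn (fun t => (s.map (· + t)).esymm (j + 1)) (Ici 0) := by
  refine strictMonoOn_of_deriv_pos (convex_Ici 0)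
    (fun t _ => (hasDerivAt_esymm_map_add s j t).continuousAt.continuousWithinAt) fun t ht => ?_
  rw [interior_Ici] at ht
  rw [(hasDerivAt_esymm_map_add s j t).deriv]
  exact mul_pos (sub_pos.mpr (by exact_mod_cast hj)) (hpos t (le_of_lt ht))

end Esymm

section GardingCone

/-- The Gårding cone `Γ_k`, for a multiset in place of a vector of eigenvalues. The index `j = 0`
is harmless, since `s.esymm 0 = 1`. -/
def MemGardingCone (k : ℕ) (s : Multiset ℝ) : Prop :=
  ∀ j ≤ k, 0 < s.esymm j

namespace MemGardingCone

variable {k : ℕ} {a t : ℝ} {s : Multiset ℝ}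

theorem mono {l : ℕ} (hs : MemGardingCone k s) (hl : l ≤ k) : MemGardingCone l s :=
  fun j hj => hs j (hj.trans hl)

theorem le_card (hs : MemGardingCone k s) : k ≤ s.card := by
  by_contra! hk
  exact (hs k le_rfl).ne' (esymm_eq_zero_of_card_lt hk)

theorem esymm_le_esymm_map_add (hs : MemGardingCone k s) (ht : 0 ≤ t) {j : ℕ} (hj : j ≤ k) :
    s.esymm j ≤ (s.map (· + t)).esymm j := by
  induction j generalizing t with
  | zero => simp [esymm_zero]
  | succ j ih =>
    have hpos (t : ℝ) (ht : 0 ≤ t) : 0 < (s.map (· + t)).esymm j :=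
      (hs j (by omega)).trans_le (ih ht (by omega))
    have hmono := strictMonoOn_esymm_map_add (hj.trans hs.le_card) hpos
    simpa using hmono.monotoneOn self_mem_Ici ht ht

theorem map_add (hs : MemGardingCone k s) (ht : 0 ≤ t) : MemGardingCone k (s.map (· + t)) :=
  fun j hj => (hs j hj).trans_le (hs.esymm_le_esymm_map_add ht hj)

theorem esymm_lt_esymm_map_add (hs : MemGardingCone k s) (ht : 0 < t) {j : ℕ} (hj : j + 1 ≤ k) :
    s.esymm (j + 1) < (s.map (· + t)).esymm (j + 1) := by
  have hmono := strictMonoOn_esymm_map_add (hj.trans hs.le_card)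
    fun t ht => hs.map_add ht j (by omega)
  simpa using hmono self_mem_Ici ht.le ht

/-- If `σ_{j+1}(s) ≤ 0`, positivity of `σ_{j+1}` and `σ_{j+2}` on `a ::ₘ s` forces
`σ_{j+1}(s)² < σ_j(s) σ_{j+2}(s)`, against Newton's inequality. -/
theorem of_cons (hs : MemGardingCone (k + 1) (a ::ₘ s)) : MemGardingCone k s := by
  have hcard := hs.le_card
  rw [Multiset.card_cons] at hcard
  intro j hj
  induction j with
  | zero => simp [esymm_zero]
  | succ j ih =>
    have hpos := ih (by omega)
    have h₁ := hs (j + 1) (by omega)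
    have h₂ := hs (j + 2) (by omega)
    have hnewton := newton_esymm s j
    have hd : (0 : ℝ) ≤ s.card - j - 1 := by
      have : (j : ℝ) + 1 ≤ s.card := by exact_mod_cast (show j + 1 ≤ s.card by omega)
      linarith
    rw [esymm_cons] at h₁ h₂
    by_contra! hneg
    have hsq : s.esymm (j + 1) ^ 2 < s.esymm j * s.esymm (j + 2) := by nlinarith
    have hcoef : ((j : ℝ) + 1) * (s.card - j - 1) < (j + 2) * (s.card - j) := by nlinarith
    have hlt := mul_lt_mul_of_pos_left hsq (show (0 : ℝ) < (j + 2) * (s.card - j) by nlinarith)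
    have hle := mul_le_mul_of_nonneg_right hcoef.le (sq_nonneg (s.esymm (j + 1)))
    linarith

/-- Newton's inequality bounds the derivative in `t` of the quotient on the right from below by
`(|s| - k) / (k + 1)`. -/
theorem esymm_div_esymm_add_le (hs : MemGardingCone k s) (ht : 0 ≤ t) :
    s.esymm (k + 1) / s.esymm k + (s.card - k) / (k + 1) * t ≤
      (s.map (· + t)).esymm (k + 1) / (s.map (· + t)).esymm k := by
  obtain ⟨e', he', hnewton⟩ : ∃ e' : ℝ → ℝ,
      (∀ t, HasDerivAt (fun t => (s.map (· + t)).esymm k) (e' t) t) ∧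
      ∀ t, ((k : ℝ) + 1) * (e' t * (s.map (· + t)).esymm (k + 1)) ≤
        k * (s.card - k) * (s.map (· + t)).esymm k ^ 2 := by
    cases k with
    | zero => exact ⟨0, fun t => by simpa [esymm_zero] using hasDerivAt_const t (1 : ℝ), by simp⟩
    | succ k =>
      refine ⟨_, hasDerivAt_esymm_map_add s k, fun t => ?_⟩
      have := newton_esymm (s.map (· + t)) k
      rw [Multiset.card_map] at this
      push_cast
      linear_combination this
  have hderiv (t : ℝ) (ht : 0 ≤ t) :=
    ((hasDerivAt_esymm_map_add s k t).div (he' t) (hs.map_add ht k le_rfl).ne').sub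
      ((hasDerivAt_id t).const_mul ((s.card - k : ℝ) / (k + 1)))
  have hmono : MonotoneOn ((fun t => (s.map (· + t)).esymm (k + 1)) /
      (fun t => (s.map (· + t)).esymm k) - fun t => (s.card - k : ℝ) / (k + 1) * id t)
      (Ici 0) := by
    refine monotoneOn_of_hasDerivWithinAt_nonneg (convex_Ici 0)
      (fun t ht => (hderiv t ht).continuousAt.continuousWithinAt)
      (fun t ht => (hderiv t (interior_subset ht)).hasDerivWithinAt) fun t ht => ?_
    have hpos := hs.map_add (interior_subset ht) k le_rfl
    rw [sub_nonneg, mul_one, div_le_div_iff₀ (by positivity) (by positivity)]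
    linear_combination hnewton t
  have := hmono self_mem_Ici ht ht
  simp only [Pi.sub_apply, Pi.div_apply, id, add_zero, mul_zero, sub_zero, Multiset.map_id'] at this
  linarith

theorem esymm_cons_le_esymm_map_add_add_mul (hs : MemGardingCone k (a ::ₘ s)) (ht : 0 ≤ t) {c : ℝ}
    (hc : 0 ≤ (s.card + 1) * t + k * c) {j : ℕ} (hj : j + 1 ≤ k) :
    (a ::ₘ s).esymm (j + 1) ≤
      ((a ::ₘ s).map (· + t)).esymm (j + 1) + c * (s.map (· + t)).esymm j := by
  have hs' : MemGardingCone j s := (hs.mono hj).of_cons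
  have hpos := hs' j le_rfl
  have hle := hs'.esymm_le_esymm_map_add ht le_rfl
  have hquot := hs'.esymm_div_esymm_add_le ht
  have hcons := hs (j + 1) hj
  have hc' : 0 ≤ (s.card - j) / (j + 1) * t + t + c := by
    have hj₀ : (0 : ℝ) < j + 1 := by positivity
    have hjk : (j : ℝ) + 1 ≤ k := by exact_mod_cast hj
    have hnum : 0 ≤ (s.card + 1) * t + (j + 1) * c := by
      rcases le_total 0 c with hc₀ | hc₀
      · positivity
      · nlinarith
    have hdiv : (s.card - j) / (j + 1) * t + t + c =
        ((s.card + 1) * t + (j + 1) * c) / (j + 1) := by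
      field_simp
      ring
    exact hdiv ▸ div_nonneg hnum hj₀.le
  rw [esymm_cons] at hcons ⊢
  rw [Multiset.map_cons, esymm_cons, add_assoc, ← add_mul]
  have hfactor (x y b : ℝ) (hy : 0 < y) : x + b * y = (x / y + b) * y := by field_simp
  rw [hfactor _ _ _ hpos] at hcons ⊢
  rw [hfactor _ _ _ (hpos.trans_le hle)]
  have hquot₀ := pos_of_mul_pos_left hcons hpos.le
  exact mul_le_mul (by linarith) hle hpos.le (by linarith)

end MemGardingCone

end GardingCone

section CharacteristicPolynomial

open Matrix Polynomial

variable {ι K : Type*} [Fintype ι] [DecidableEq ι] [Field K]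

theorem det_diagonal_add_smul_vecMulVec (d v w : ι → K) (c : K) (hd : ∀ i, d i ≠ 0) :
    (diagonal d + c • vecMulVec v w).det =
      ∏ i, d i + c * ∑ i, v i * w i * ∏ l ∈ Finset.univ.erase i, d l := by
  have hfactor : diagonal d + c • vecMulVec v w = diagonal d *
      (1 + replicateCol Unit (fun i => c * v i / d i) * replicateRow Unit w) := by
    have hv : c • v = diagonal d *ᵥ fun i => c * v i / d i := by
      ext i
      rw [mulVec_diagonal, mul_div_cancel₀ _ (hd i), Pi.smul_apply, smul_eq_mul]
    rw [← smul_vecMulVec, hv, ← mul_vecMulVec, mul_add, mul_one, vecMulVec_eq Unit]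
  rw [hfactor, det_mul, det_diagonal, det_one_add_replicateCol_mul_replicateRow, mul_add, mul_one,
    dotProduct, Finset.mul_sum, Finset.mul_sum]
  congr 1
  refine Finset.sum_congr rfl fun i _ => ?_
  rw [← Finset.mul_prod_erase Finset.univ d (Finset.mem_univ i)]
  field_simp [hd i]

theorem charpoly_neg_diagonal_add_smul_vecMulVec [Infinite K] (d v w : ι → K) (c : K) :
    (-(diagonal d + c • vecMulVec v w)).charpoly = ∏ i, (X + C (d i)) +
      C c * ∑ i, C (v i * w i) * ∏ l ∈ Finset.univ.erase i, (X + C (d l)) := by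
  have hinf := (finite_range (-d)).infinite_compl
  refine eq_of_infinite_eval_eq _ _ (hinf.mono fun t ht => ?_)
  have ht' (i : ι) : t + d i ≠ 0 := fun h =>
    ht ⟨i, (eq_neg_of_add_eq_zero_left h).symm⟩
  have hdiag : scalar ι t - -(diagonal d + c • vecMulVec v w) =
      diagonal (fun i => t + d i) + c • vecMulVec v w := by
    rw [sub_neg_eq_add, ← add_assoc, scalar_apply, diagonal_add]
  rw [mem_ofPred_eq, eval_charpoly, hdiag, det_diagonal_add_smul_vecMulVec _ _ _ _ ht']
  simp [eval_prod, eval_finsetSum]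

theorem exists_charpoly_neg_add_smul_one_add_smul_vecMulVec {A : Matrix ι ι ℝ}
    (hA : A.IsHermitian) (v : ι → ℝ) : ∃ w : ι → ℝ, w ⬝ᵥ w = v ⬝ᵥ v ∧ ∀ τ c : ℝ,
      (-(A + τ • 1 + c • vecMulVec v v)).charpoly = ∏ i, (X + C (hA.eigenvalues i + τ)) +
        C c * ∑ i, C (w i * w i) *
          ∏ l ∈ Finset.univ.erase i, (X + C (hA.eigenvalues l + τ)) := by
  set U : Matrix ι ι ℝ := ↑hA.eigenvectorUnitary
  have hUU : U * Uᵀ = 1 := Unitary.coe_mul_star_self hA.eigenvectorUnitary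
  have hUU' : Uᵀ * U = 1 := Unitary.coe_star_mul_self hA.eigenvectorUnitary
  have hspec : A = U * diagonal hA.eigenvalues * Uᵀ :=
    hA.spectral_theorem.trans (Unitary.conjStarAlgAut_apply _ _)
  have hv : U *ᵥ (Uᵀ *ᵥ v) = v := by rw [mulVec_mulVec, hUU, one_mulVec]
  refine ⟨Uᵀ *ᵥ v, by rw [dotProduct_mulVec, vecMul_transpose, hv], fun τ c => ?_⟩
  have hconj : -(A + τ • 1 + c • vecMulVec v v) =
      U * -(diagonal (fun i => hA.eigenvalues i + τ) + c • vecMulVec (Uᵀ *ᵥ v) (Uᵀ *ᵥ v)) *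
        Uᵀ := by
    have hvv : vecMulVec v v = U * vecMulVec (Uᵀ *ᵥ v) (Uᵀ *ᵥ v) * Uᵀ := by
      rw [mul_vecMulVec, vecMulVec_mul, vecMul_transpose, hv]
    have hτ : diagonal (fun i => hA.eigenvalues i + τ) = diagonal hA.eigenvalues + τ • 1 := by
      rw [smul_one_eq_diagonal, diagonal_add]
    rw [hτ, mul_neg, neg_mul, mul_add, mul_add, add_mul, add_mul, ← hspec, mul_smul_comm,
      smul_mul_assoc, mul_one, hUU, mul_smul_comm, smul_mul_assoc, ← hvv]
  rw [hconj, charpoly_mul_comm, ← mul_assoc, hUU', one_mul,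
    charpoly_neg_diagonal_add_smul_vecMulVec]

end CharacteristicPolynomial

section SigmaMat

open Matrix

variable {n : ℕ} {A : Matrix (Fin n) (Fin n) ℝ}

theorem isHermitian_add_smul_one_add_smul_vecMulVec (hA : A.IsHermitian) (τ c : ℝ)
    (v : Fin n → ℝ) : (A + τ • 1 + c • vecMulVec v v).IsHermitian :=
  (hA.add (isHermitian_one.smul (IsSelfAdjoint.all τ))).add
    ((posSemidef_vecMulVec_self_star v).isHermitian.smul (IsSelfAdjoint.all c))

theorem sigmaMat_eq_esymm_eigenvalues (hA : A.IsHermitian) (j : ℕ) :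
    sigmaMat j A = (Finset.univ.val.map hA.eigenvalues).esymm j := by
  rw [sigmaMat, dif_pos hA, Finset.esymm_map_val, esymmVec]

theorem sigmaMat_zero (hA : A.IsHermitian) : sigmaMat 0 A = 1 := by
  rw [sigmaMat_eq_esymm_eigenvalues hA, esymm_zero]

open Polynomial in
theorem coeff_prod_X_add_C {ι R : Type*} [CommSemiring R] (s : Finset ι) (f : ι → R) {i j : ℕ}
    (hij : i + j = s.card) : (∏ l ∈ s, (X + C (f l))).coeff i = (s.val.map f).esymm j := by
  rw [Finset.prod, Multiset.prod_X_add_C_coeff' _ _ (by rw [Finset.card_val]; omega),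
    Finset.card_val, ← hij, Nat.add_sub_cancel_left]

theorem sigmaMat_eq_coeff_charpoly_neg (hA : A.IsHermitian) {i j : ℕ} (hij : i + j = n) :
    sigmaMat j A = (-A).charpoly.coeff i := by
  obtain ⟨w, -, hw⟩ := exists_charpoly_neg_add_smul_one_add_smul_vecMulVec hA 0
  have h := hw 0 0
  simp only [zero_smul, add_zero, map_zero, zero_mul] at h
  rw [h, coeff_prod_X_add_C _ _ (by simpa using hij), sigmaMat_eq_esymm_eigenvalues hA]

theorem exists_sigmaMat_add_smul_one_add_smul_vecMulVec (hA : A.IsHermitian) (v : Fin n → ℝ) :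
    ∃ w : Fin n → ℝ, w ⬝ᵥ w = v ⬝ᵥ v ∧ ∀ (τ c : ℝ) (j : ℕ), j + 1 ≤ n →
      sigmaMat (j + 1) (A + τ • 1 + c • vecMulVec v v) =
        ((Finset.univ.val.map hA.eigenvalues).map (· + τ)).esymm (j + 1) +
          c * ∑ i, w i * w i *
            (((Finset.univ.erase i).val.map hA.eigenvalues).map (· + τ)).esymm j := by
  obtain ⟨w, hwv, hw⟩ := exists_charpoly_neg_add_smul_one_add_smul_vecMulVec hA v
  refine ⟨w, hwv, fun τ c j hj => ?_⟩
  have hcoeff (i : Fin n) := coeff_prod_X_add_C (Finset.univ.erase i)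
    (fun l => hA.eigenvalues l + τ) (i := n - (j + 1)) (j := j) (by simp; omega)
  rw [sigmaMat_eq_coeff_charpoly_neg (isHermitian_add_smul_one_add_smul_vecMulVec hA τ c v)
    (Nat.sub_add_cancel hj), hw, Polynomial.coeff_add, Polynomial.coeff_C_mul,
    Polynomial.finsetSum_coeff, coeff_prod_X_add_C _ _ (j := j + 1) (by simpa using by omega)]
  simp only [Polynomial.coeff_C_mul, hcoeff, Multiset.map_map, Function.comp_apply]

end SigmaMat

namespace InGardingCone

open Matrix

variable {n k : ℕ} {A B : Matrix (Fin n) (Fin n) ℝ}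

theorem isHermitian (hA : InGardingCone k A) : A.IsHermitian := hA.1

theorem memGardingCone (hA : InGardingCone k A) :
    MemGardingCone k (Finset.univ.val.map hA.isHermitian.eigenvalues) := by
  intro j hj
  rcases Nat.eq_zero_or_pos j with rfl | hj₀
  · simp [esymm_zero]
  · rw [Finset.esymm_map_val]
    exact hA.2 j hj₀ hj

theorem sigmaMat_pos (hA : InGardingCone k A) {j : ℕ} (hj : j ≤ k) : 0 < sigmaMat j A := by
  rw [sigmaMat_eq_esymm_eigenvalues hA.isHermitian]
  exact hA.memGardingCone j hj

theorem le_dim (hA : InGardingCone k A) : k ≤ n := by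
  simpa using hA.memGardingCone.le_card

theorem of_sigmaMat_le (hA : InGardingCone k A) (hB : B.IsHermitian)
    (h : ∀ j ≤ k, sigmaMat j A ≤ sigmaMat j B) : InGardingCone k B := by
  refine ⟨hB, fun j _ hj => ?_⟩
  have := (hA.sigmaMat_pos hj).trans_le (h j hj)
  rwa [sigmaMat, dif_pos hB] at this

theorem sigmaMat_le_add_smul_one_add_smul_vecMulVec (hA : InGardingCone k A) {τ c : ℝ}
    {v : Fin n → ℝ} (hτ : 0 ≤ τ) (hc : 0 ≤ n * τ + k * (c * (v ⬝ᵥ v))) {j : ℕ} (hj : j ≤ k) :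
    sigmaMat j A ≤ sigmaMat j (A + τ • 1 + c • vecMulVec v v) := by
  have hB := isHermitian_add_smul_one_add_smul_vecMulVec hA.isHermitian τ c v
  cases j with
  | zero => rw [sigmaMat_zero hA.isHermitian, sigmaMat_zero hB]
  | succ j =>
    obtain ⟨w, hwv, hw⟩ :=
      exists_sigmaMat_add_smul_one_add_smul_vecMulVec hA.isHermitian v
    rw [hw τ c j (hj.trans hA.le_dim), sigmaMat_eq_esymm_eigenvalues hA.isHermitian]
    set lam := hA.isHermitian.eigenvalues
    rw [← hwv] at hc
    rcases eq_or_ne w 0 with rfl | hw₀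
    · simpa using hA.memGardingCone.esymm_le_esymm_map_add hτ hj
    have hW : 0 < w ⬝ᵥ w := dotProduct_self_star_pos_iff.mpr hw₀
    have hterm (i : Fin n) : (Finset.univ.val.map lam).esymm (j + 1) ≤
        ((Finset.univ.val.map lam).map (· + τ)).esymm (j + 1) +
          c * (w ⬝ᵥ w) * (((Finset.univ.erase i).val.map lam).map (· + τ)).esymm j := by
      have hcons : Finset.univ.val.map lam = lam i ::ₘ (Finset.univ.erase i).val.map lam := by
        rw [← Multiset.map_cons, Finset.erase_val, Multiset.cons_erase (Finset.mem_univ_val i)]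
      have hcard : ((Finset.univ.erase i).val.map lam).card + 1 = n := by
        simpa using (congrArg Multiset.card hcons).symm
      have hcone := hA.memGardingCone
      rw [hcons] at hcone ⊢
      refine hcone.esymm_cons_le_esymm_map_add_add_mul hτ ?_ hj
      rwa [← Nat.cast_succ, Nat.succ_eq_add_one, hcard]
    refine le_of_mul_le_mul_left ?_ hW
    calc (w ⬝ᵥ w) * (Finset.univ.val.map lam).esymm (j + 1)
        = ∑ i, w i * w i * (Finset.univ.val.map lam).esymm (j + 1) := by
          rw [← Finset.sum_mul, dotProduct]
      _ ≤ ∑ i, w i * w i * (((Finset.univ.val.map lam).map (· + τ)).esymm (j + 1) +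
            c * (w ⬝ᵥ w) * (((Finset.univ.erase i).val.map lam).map (· + τ)).esymm j) :=
          Finset.sum_le_sum fun i _ => mul_le_mul_of_nonneg_left (hterm i) (mul_self_nonneg _)
      _ = _ := by
          simp only [mul_add, Finset.sum_add_distrib, ← Finset.sum_mul, Finset.mul_sum]
          rw [dotProduct]
          congr 1
          exact Finset.sum_congr rfl fun i _ => by ring

theorem add_smul_one (hA : InGardingCone k A) {τ : ℝ} (hτ : 0 ≤ τ) :
    InGardingCone k (A + τ • 1) := by
  refine hA.of_sigmaMat_le ?_ fun j hj => ?_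
  · exact hA.isHermitian.add (isHermitian_one.smul (IsSelfAdjoint.all τ))
  · simpa using hA.sigmaMat_le_add_smul_one_add_smul_vecMulVec (v := 0) (c := 0) hτ
      (by simpa using by positivity) hj

theorem sigmaMat_lt_add_smul_one (hA : InGardingCone k A) {τ : ℝ} (hτ : 0 < τ) {j : ℕ}
    (hj : j + 1 ≤ k) : sigmaMat (j + 1) A < sigmaMat (j + 1) (A + τ • 1) := by
  obtain ⟨w, -, hw⟩ := exists_sigmaMat_add_smul_one_add_smul_vecMulVec hA.isHermitian 0
  have hτw := hw τ 0 j (hj.trans hA.le_dim)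
  rw [zero_smul, add_zero, zero_mul, add_zero] at hτw
  rw [hτw, sigmaMat_eq_esymm_eigenvalues hA.isHermitian]
  exact hA.memGardingCone.esymm_lt_esymm_map_add hτ hj

theorem sigmaMat_le_of_posSemidef_sub (hA : InGardingCone k A) (hB : (B - A).PosSemidef) {j : ℕ}
    (hj : j ≤ k) : sigmaMat j A ≤ sigmaMat j B := by
  obtain ⟨m, v, hv⟩ := posSemidef_iff_eq_sum_vecMulVec.mp hB
  have hpartial (s : Finset (Fin m)) : InGardingCone k (A + ∑ i ∈ s, vecMulVec (v i) (v i)) ∧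
      ∀ j ≤ k, sigmaMat j A ≤ sigmaMat j (A + ∑ i ∈ s, vecMulVec (v i) (v i)) := by
    induction s using Finset.induction_on with
    | empty => simpa using hA
    | insert i s hi ih =>
      obtain ⟨hcone, hle⟩ := ih
      rw [Finset.sum_insert hi, add_comm (vecMulVec _ _), ← add_assoc]
      have hstep := fun j => hcone.sigmaMat_le_add_smul_one_add_smul_vecMulVec (τ := 0) (c := 1)
        (v := v i) (j := j) le_rfl (by
          simpa using mul_nonneg k.cast_nonneg (dotProduct_self_star_nonneg (v i)))
      simp only [zero_smul, add_zero, one_smul] at hstep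
      refine ⟨hcone.of_sigmaMat_le ?_ hstep, fun j hj => (hle j hj).trans (hstep j hj)⟩
      exact hcone.isHermitian.add (posSemidef_vecMulVec_self_star (v i)).isHermitian
  rw [← add_sub_cancel A B, hv]
  exact (hpartial Finset.univ).2 j hj

end InGardingCone

section SecondDerivativeTest

variable {E : Type*} [NormedAddCommGroup E] [NormedSpace ℝ E]

theorem deriv_deriv_nonpos_of_isLocalMax {g : ℝ → ℝ} {a : ℝ} (hg : ContinuousAt g a)
    (hmax : IsLocalMax g a) : deriv (deriv g) a ≤ 0 := by
  by_contra! hpos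
  have hmin : IsLocalMin g a := isLocalMin_of_deriv_deriv_pos hpos hmax.deriv_eq_zero hg
  have hconst : g =ᶠ[𝓝 a] fun _ => g a := by
    filter_upwards [hmax, hmin] with t hle hge using le_antisymm hle hge
  rw [hconst.deriv.deriv_eq] at hpos
  simp at hpos

theorem deriv_deriv_comp_add_smul {f : E → ℝ} {x : E} (hf : ContDiffAt ℝ 2 f x) (y : E) :
    deriv (deriv fun t : ℝ => f (x + t • y)) 0 = fderiv ℝ (fderiv ℝ f) x y y := by
  have hline (t : ℝ) : HasDerivAt (fun t : ℝ => x + t • y) y t := by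
    simpa using ((hasDerivAt_id t).smul_const y).const_add x
  have hlim : Tendsto (fun t : ℝ => x + t • y) (𝓝 0) (𝓝 x) := by
    simpa using (hline 0).continuousAt.tendsto
  have hdiff : ∀ᶠ z in 𝓝 x, DifferentiableAt ℝ f z := by
    filter_upwards [hf.eventually (by simp)] with z hz using hz.differentiableAt (by simp)
  have hderiv : deriv (fun t : ℝ => f (x + t • y)) =ᶠ[𝓝 0] fun t => fderiv ℝ f (x + t • y) y := by
    filter_upwards [hlim.eventually hdiff] with t ht
    exact (ht.hasFDerivAt.comp_hasDerivAt t (hline t)).deriv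
  have hfderiv : HasFDerivAt (fderiv ℝ f) (fderiv ℝ (fderiv ℝ f) x) (x + (0 : ℝ) • y) := by
    simpa using ((hf.fderiv_right (m := 1) (by norm_num)).differentiableAt (by simp)).hasFDerivAt
  rw [hderiv.deriv_eq]
  exact ((ContinuousLinearMap.apply ℝ ℝ y).hasFDerivAt.comp_hasDerivAt (0 : ℝ)
    (hfderiv.comp_hasDerivAt (0 : ℝ) (hline 0))).deriv

theorem fderiv_fderiv_apply_apply_nonpos_of_isLocalMax {f : E → ℝ} {x : E}
    (hf : ContDiffAt ℝ 2 f x) (hmax : IsLocalMax f x) (y : E) :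
    fderiv ℝ (fderiv ℝ f) x y y ≤ 0 := by
  have hline : ContinuousAt (fun t : ℝ => x + t • y) 0 := by fun_prop
  have hx : x = x + (0 : ℝ) • y := by simp
  rw [hx] at hmax
  rw [← deriv_deriv_comp_add_smul hf]
  exact deriv_deriv_nonpos_of_isLocalMax (.comp (hx ▸ hf.continuousAt) hline)
    (hmax.comp_tendsto (g := fun t : ℝ => x + t • y) hline.tendsto)

end SecondDerivativeTest

section Hessian

open Matrix

variable {n : ℕ} {f g : Euc n → ℝ} {x : Euc n}

theorem hessian_apply (f : Euc n → ℝ) (x : Euc n) (i j : Fin n) :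
    hessian f x i j = fderiv ℝ (fderiv ℝ f) x (EuclideanSpace.single i 1)
      (EuclideanSpace.single j 1) := by
  simp [hessian, iteratedFDeriv_two_apply]

theorem hessianWithin_of_mem_nhds (f : Euc n → ℝ) {s : Set (Euc n)} (hs : s ∈ 𝓝 x) :
    hessianWithin f s x = hessian f x := by
  ext i j
  rw [hessian, hessianWithin, iteratedFDerivWithin_congr_set (eventuallyEq_univ.mpr hs),
    iteratedFDerivWithin_univ]

theorem isHermitian_hessian (hf : ContDiffAt ℝ 2 f x) : (hessian f x).IsHermitian := by
  ext i j
  simp only [conjTranspose_apply, star_trivial, hessian_apply]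
  exact hf.isSymmSndFDerivAt (by simp) _ _

theorem hessian_add (hf : ContDiffAt ℝ 2 f x) (hg : ContDiffAt ℝ 2 g x) :
    hessian (f + g) x = hessian f x + hessian g x := by
  ext i j
  simp [hessian, iteratedFDeriv_add_apply hf hg]

theorem hessian_sub (hf : ContDiffAt ℝ 2 f x) (hg : ContDiffAt ℝ 2 g x) :
    hessian (f - g) x = hessian f x - hessian g x := by
  ext i j
  simp [hessian, iteratedFDeriv_sub_apply hf hg]

theorem dotProduct_hessian_mulVec (f : Euc n → ℝ) (x : Euc n) (y : Fin n → ℝ) :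
    y ⬝ᵥ hessian f x *ᵥ y = fderiv ℝ (fderiv ℝ f) x (WithLp.toLp 2 y) (WithLp.toLp 2 y) := by
  have hy : (WithLp.toLp 2 y : Euc n) = ∑ i, y i • EuclideanSpace.single i 1 := by
    ext j
    simp [Finset.sum_apply, Pi.single_apply]
  simp only [hy, map_sum, map_smul, _root_.sum_apply, _root_.smul_apply, dotProduct, mulVec,
    hessian_apply, smul_eq_mul, Finset.mul_sum]
  rw [Finset.sum_comm]
  exact Finset.sum_congr rfl fun i _ => Finset.sum_congr rfl fun j _ => by ring

theorem posSemidef_hessian_sub_of_isLocalMax_sub (hf : ContDiffAt ℝ 2 f x)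
    (hg : ContDiffAt ℝ 2 g x) (hmax : IsLocalMax (f - g) x) :
    (hessian g x - hessian f x).PosSemidef := by
  refine .of_dotProduct_mulVec_nonneg
    ((isHermitian_hessian hg).sub (isHermitian_hessian hf)) fun y => ?_
  rw [← neg_sub, ← hessian_sub hf hg, neg_mulVec, dotProduct_neg, star_trivial,
    dotProduct_hessian_mulVec, neg_nonneg]
  exact fderiv_fderiv_apply_apply_nonpos_of_isLocalMax (hf.sub hg) hmax _

theorem hessian_comp_norm_sub_sq {φ φ' : ℝ → ℝ} {φ'' : ℝ} {x₀ : Euc n}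
    (hφ : ∀ᶠ s in 𝓝 (‖x - x₀‖ ^ 2), HasDerivAt φ (φ' s) s)
    (hφ' : HasDerivAt φ' φ'' (‖x - x₀‖ ^ 2)) :
    hessian (fun y => φ (‖y - x₀‖ ^ 2)) x =
      (2 * φ' (‖x - x₀‖ ^ 2)) • 1 +
        (4 * φ'') • vecMulVec (x - x₀).ofLp (x - x₀).ofLp := by
  have hnorm (y : Euc n) :
      HasFDerivAt (fun y : Euc n => ‖y - x₀‖ ^ 2) (2 • innerSL ℝ (y - x₀)) y := by
    simpa using ((hasFDerivAt_id y).sub_const x₀).norm_sq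
  have hfderiv : fderiv ℝ (fun y => φ (‖y - x₀‖ ^ 2)) =ᶠ[𝓝 x]
      fun y => φ' (‖y - x₀‖ ^ 2) • (2 • innerSL ℝ (y - x₀)) := by
    filter_upwards [(hnorm x).continuousAt.tendsto.eventually hφ] with y hy
    exact (hy.comp_hasFDerivAt y (hnorm y)).fderiv
  have hinner : HasFDerivAt (fun y : Euc n => 2 • innerSL ℝ (y - x₀)) (2 • innerSL ℝ) x :=
    ((innerSL ℝ).hasFDerivAt.comp x ((hasFDerivAt_id x).sub_const x₀)).const_smul 2
  have hbasis (i j : Fin n) : innerSL ℝ (EuclideanSpace.single i (1 : ℝ) : Euc n)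
      (EuclideanSpace.single j 1) = (1 : Matrix (Fin n) (Fin n) ℝ) i j := by
    rw [innerSL_apply_apply, EuclideanSpace.inner_single_left]
    simp [Matrix.one_apply]
  have hfderiv₂ : HasFDerivAt (fun y => φ' (‖y - x₀‖ ^ 2) • (2 • innerSL ℝ (y - x₀)))
      (φ' (‖x - x₀‖ ^ 2) • 2 • innerSL ℝ +
        (φ'' • 2 • innerSL ℝ (x - x₀)).smulRight (2 • innerSL ℝ (x - x₀))) x :=
    (hφ'.comp_hasFDerivAt x (hnorm x)).smul hinner
  ext i j
  rw [hessian_apply, hfderiv.fderiv_eq, hfderiv₂.fderiv]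
  simp [vecMulVec_apply, hbasis, EuclideanSpace.inner_single_right]
  ring

end Hessian

section ComparisonPrinciple

variable {n k : ℕ} {h f g : Euc n → ℝ} {U V : Set (Euc n)} {x : Euc n}

/-- `f` is a strictly `k`-convex classical subsolution of `σ_k(D²f) = h` in `U`, continuous up to
the boundary of `U`. -/
structure IsKHessianSubsol (k : ℕ) (h : Euc n → ℝ) (U : Set (Euc n)) (f : Euc n → ℝ) : Prop where
  continuousOn : ContinuousOn f (closure U)
  contDiffAt : ∀ x ∈ U, ContDiffAt ℝ 2 f x
  inGardingCone : ∀ x ∈ U, InGardingCone k (hessian f x)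
  le_sigmaMat : ∀ x ∈ U, h x ≤ sigmaMat k (hessian f x)

/-- `f` is a strictly `k`-convex classical solution of `σ_k(D²f) = h` in `U`, continuous up to
the boundary of `U`. -/
structure IsKHessianSol (k : ℕ) (h : Euc n → ℝ) (U : Set (Euc n)) (f : Euc n → ℝ) : Prop
    extends IsKHessianSubsol k h U f where
  sigmaMat_le : ∀ x ∈ U, sigmaMat k (hessian f x) ≤ h x

theorem IsKHessianSubsol.mono (hf : IsKHessianSubsol k h V f) (hUV : U ⊆ V) :
    IsKHessianSubsol k h U f where
  continuousOn := hf.continuousOn.mono (closure_mono hUV)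
  contDiffAt x hx := hf.contDiffAt x (hUV hx)
  inGardingCone x hx := hf.inGardingCone x (hUV hx)
  le_sigmaMat x hx := hf.le_sigmaMat x (hUV hx)

theorem IsKHessianSol.mono (hf : IsKHessianSol k h V f) (hUV : U ⊆ V) : IsKHessianSol k h U f where
  toIsKHessianSubsol := hf.toIsKHessianSubsol.mono hUV
  sigmaMat_le x hx := hf.sigmaMat_le x (hUV hx)

theorem not_isLocalMax_sub_of_sigmaMat_hessian_lt (hf : ContDiffAt ℝ 2 f x)
    (hg : ContDiffAt ℝ 2 g x) (hcone : InGardingCone k (hessian f x))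
    (hlt : sigmaMat k (hessian g x) < sigmaMat k (hessian f x)) : ¬IsLocalMax (f - g) x :=
  fun hmax => hlt.not_ge <| hcone.sigmaMat_le_of_posSemidef_sub
    (posSemidef_hessian_sub_of_isLocalMax_sub hf hg hmax) le_rfl

theorem le_on_closure_of_forall_not_isLocalMax {X : Type*} [TopologicalSpace X] {U : Set X}
    {w : X → ℝ} {b : ℝ} (hUo : IsOpen U) (hUc : IsCompact (closure U))
    (hw : ContinuousOn w (closure U)) (hb : ∀ x ∈ frontier U, w x ≤ b)
    (hmax : ∀ x ∈ U, ¬IsLocalMax w x) : ∀ x ∈ closure U, w x ≤ b := by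
  intro z hz
  obtain ⟨x, hx, hxmax⟩ := hUc.exists_isMaxOn ⟨z, hz⟩ hw
  have hxU : x ∉ U := fun hxU =>
    hmax x hxU (hxmax.isLocalMax (mem_of_superset (hUo.mem_nhds hxU) subset_closure))
  exact (hxmax hz).trans (hb x (hUo.frontier_eq ▸ ⟨hx, hxU⟩))

theorem contDiff_const_mul_norm_sub_sq_sub (η c : ℝ) (x₀ : Euc n) :
    ContDiff ℝ 2 fun y : Euc n => η * (‖y - x₀‖ ^ 2 - c) :=
  contDiff_const.mul (((contDiff_id.sub contDiff_const).norm_sq ℝ).sub contDiff_const)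

theorem hessian_const_mul_norm_sub_sq_sub (η c : ℝ) (x x₀ : Euc n) :
    hessian (fun y => η * (‖y - x₀‖ ^ 2 - c)) x = (2 * η) • 1 := by
  have h := hessian_comp_norm_sub_sq (φ := fun s => η * (s - c)) (φ' := fun _ => η) (x := x)
    (x₀ := x₀) (.of_forall fun s => by simpa using ((hasDerivAt_id s).sub_const c).const_mul η)
    (hasDerivAt_const _ _)
  simpa using h

/-- The perturbation `η (|x|² - r²)` makes the subsolution strict without raising its boundary
values. -/
theorem IsKHessianSubsol.le_of_le_frontier (hk : 1 ≤ k) (hUo : IsOpen U) (hUb : IsBounded U)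
    (hf : IsKHessianSubsol k h U f) (hg : IsKHessianSol k h U g)
    (hfg : ∀ x ∈ frontier U, f x ≤ g x) : ∀ x ∈ closure U, f x ≤ g x := by
  intro z hz
  obtain ⟨r, hr⟩ := hUb.isCompact_closure.isBounded.exists_norm_le
  have hperturbed (η : ℝ) (hη : 0 < η) : f z + η * (‖z - 0‖ ^ 2 - r ^ 2) ≤ g z := by
    set q : Euc n → ℝ := fun y => η * (‖y - 0‖ ^ 2 - r ^ 2)
    have hq : ContDiff ℝ 2 q := contDiff_const_mul_norm_sub_sq_sub η (r ^ 2) 0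
    have hq_nonpos (x : Euc n) (hx : x ∈ frontier U) : q x ≤ 0 := by
      have hxr : ‖x‖ ^ 2 ≤ r ^ 2 :=
        pow_le_pow_left₀ (norm_nonneg x) (hr x (frontier_subset_closure hx)) 2
      exact mul_nonpos_of_nonneg_of_nonpos hη.le (by simpa using hxr)
    refine sub_nonpos.mp (le_on_closure_of_forall_not_isLocalMax (w := f + q - g) hUo
      hUb.isCompact_closure ((hf.continuousOn.add hq.continuous.continuousOn).sub hg.continuousOn)
      (fun x hx => sub_nonpos.mpr ?_) (fun x hx => ?_) z hz)
    · exact (add_le_of_nonpos_right (hq_nonpos x hx)).trans (hfg x hx)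
    · have hfx := hf.contDiffAt x hx
      have hcone := hf.inGardingCone x hx
      have hhess : hessian (f + q) x = hessian f x + (2 * η) • 1 := by
        rw [hessian_add hfx hq.contDiffAt, hessian_const_mul_norm_sub_sq_sub]
      obtain ⟨j, rfl⟩ := Nat.exists_eq_add_of_le' hk
      refine not_isLocalMax_sub_of_sigmaMat_hessian_lt (k := j + 1) (hfx.add hq.contDiffAt)
        (hg.contDiffAt x hx) ?_ ?_ <;> rw [hhess]
      · exact hcone.add_smul_one (by positivity)
      · exact ((hg.sigmaMat_le x hx).trans (hf.le_sigmaMat x hx)).trans_lt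
          (hcone.sigmaMat_lt_add_smul_one (by positivity) le_rfl)
  have hlim : Tendsto (fun η : ℝ => f z + η * (‖z - 0‖ ^ 2 - r ^ 2)) (𝓝[>] 0) (𝓝 (f z)) := by
    refine tendsto_nhdsWithin_of_tendsto_nhds (Continuous.tendsto' (by fun_prop) _ _ (by simp))
  exact le_of_tendsto hlim (eventually_nhdsWithin_of_forall hperturbed)

end ComparisonPrinciple

section LogarithmicBarrier

open Matrix

variable {n k : ℕ} {h ψ : Euc n → ℝ} {U : Set (Euc n)} {x x₀ : Euc n} {δ b : ℝ}

theorem contDiffAt_const_mul_log_norm_sub_sub (δ b : ℝ) (hx : x ≠ x₀) :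
    ContDiffAt ℝ 2 (fun y : Euc n => δ * (Real.log ‖y - x₀‖ - b)) x := by
  have hx' : x - x₀ ≠ 0 := sub_ne_zero.mpr hx
  exact contDiffAt_const.mul ((((contDiffAt_id.sub contDiffAt_const).norm ℝ hx').log
    (norm_ne_zero_iff.mpr hx')).sub contDiffAt_const)

theorem hessian_const_mul_log_norm_sub_sub (δ b : ℝ) (hx : x ≠ x₀) :
    hessian (fun y : Euc n => δ * (Real.log ‖y - x₀‖ - b)) x =
      (δ / ‖x - x₀‖ ^ 2) • 1 +
        (-2 * δ / (‖x - x₀‖ ^ 2) ^ 2) • vecMulVec (x - x₀).ofLp (x - x₀).ofLp := by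
  have hs : 0 < ‖x - x₀‖ ^ 2 := pow_pos (norm_pos_iff.mpr (sub_ne_zero.mpr hx)) 2
  have hradial : (fun y : Euc n => δ * (Real.log ‖y - x₀‖ - b)) =
      fun y => (fun s => δ * (Real.log s / 2 - b)) (‖y - x₀‖ ^ 2) := by
    ext y
    simp [Real.log_pow]
  have hderiv : ∀ᶠ s in 𝓝 (‖x - x₀‖ ^ 2),
      HasDerivAt (fun s => δ * (Real.log s / 2 - b)) (δ * (s⁻¹ / 2)) s := by
    filter_upwards [lt_mem_nhds hs] with s hs
    exact (((Real.hasDerivAt_log hs.ne').div_const 2).sub_const b).const_mul δ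
  rw [hradial, hessian_comp_norm_sub_sq hderiv (((hasDerivAt_inv hs.ne').div_const 2).const_mul δ)]
  congr 2
  · ring
  · ring

/-- `δ log|x - x₀|` has Hessian eigenvalues `δ/|x - x₀|²`, with multiplicity `n - 1`, and
`-δ/|x - x₀|²`. Lowering `σ_j` by the negative one is compensated by the others if `2k ≤ n`. -/
theorem IsKHessianSubsol.add_const_mul_log (hnk : 2 * k ≤ n) (hδ : 0 ≤ δ)
    (hψ : IsKHessianSubsol k h U ψ) (hx₀ : x₀ ∉ closure U) :
    IsKHessianSubsol k h U (ψ + fun x => δ * (Real.log ‖x - x₀‖ - b)) := by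
  have hne {x : Euc n} (hx : x ∈ closure U) : x ≠ x₀ := ne_of_mem_of_not_mem hx hx₀
  have hlog {x : Euc n} (hx : x ∈ closure U) :=
    contDiffAt_const_mul_log_norm_sub_sub δ b (hne hx)
  have hsigma {x : Euc n} (hx : x ∈ U) {j : ℕ} (hj : j ≤ k) : sigmaMat j (hessian ψ x) ≤
      sigmaMat j (hessian (ψ + fun x => δ * (Real.log ‖x - x₀‖ - b)) x) := by
    have hxc := subset_closure hx
    have hs : 0 < ‖x - x₀‖ ^ 2 := pow_pos (norm_pos_iff.mpr (sub_ne_zero.mpr (hne hxc))) 2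
    have hdot : (x - x₀).ofLp ⬝ᵥ (x - x₀).ofLp = ‖x - x₀‖ ^ 2 := by
      rw [EuclideanSpace.real_norm_sq_eq]
      exact Finset.sum_congr rfl fun i _ => (sq _).symm
    rw [hessian_add (hψ.contDiffAt x hx) (hlog hxc),
      hessian_const_mul_log_norm_sub_sub δ b (hne hxc), ← add_assoc]
    refine (hψ.inGardingCone x hx).sigmaMat_le_add_smul_one_add_smul_vecMulVec
      (div_nonneg hδ hs.le) ?_ hj
    have hweights : (n : ℝ) * (δ / ‖x - x₀‖ ^ 2) +
        k * (-2 * δ / (‖x - x₀‖ ^ 2) ^ 2 * ‖x - x₀‖ ^ 2) =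
          (n - 2 * k) * (δ / ‖x - x₀‖ ^ 2) := by
      field_simp
      ring
    rw [hdot, hweights]
    exact mul_nonneg (sub_nonneg.mpr (by exact_mod_cast hnk)) (div_nonneg hδ hs.le)
  refine ⟨hψ.continuousOn.add fun x hx => (hlog hx).continuousAt.continuousWithinAt,
    fun x hx => (hψ.contDiffAt x hx).add (hlog (subset_closure hx)), fun x hx => ?_,
    fun x hx => (hψ.le_sigmaMat x hx).trans (hsigma hx le_rfl)⟩
  exact (hψ.inGardingCone x hx).of_sigmaMat_le
    (isHermitian_hessian ((hψ.contDiffAt x hx).add (hlog (subset_closure hx))))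
    fun j => hsigma hx

end LogarithmicBarrier

section PuncturedDomain

variable {n k : ℕ} {h f g ψ v : Euc n → ℝ} {Ω : Set (Euc n)} {x₀ : Euc n} {ε L R : ℝ}

theorem frontier_sdiff_closedBall_subset (hε : ε ≠ 0) :
    frontier (Ω \ closedBall x₀ ε) ⊆ frontier Ω ∪ closure Ω ∩ sphere x₀ ε := by
  rw [sdiff_eq]
  refine (frontier_inter_subset _ _).trans (union_subset_union inter_subset_left ?_)
  rw [frontier_compl, frontier_closedBall _ hε]

theorem notMem_closure_sdiff_closedBall (hε : 0 < ε) : x₀ ∉ closure (Ω \ closedBall x₀ ε) := by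
  rw [mem_closure_iff_nhds]
  push Not
  refine ⟨closedBall x₀ ε, closedBall_mem_nhds x₀ hε, ?_⟩
  ext y
  simp +contextual

theorem IsKHessianSubsol.le_of_sdiff_closedBall (hk : 1 ≤ k) (hΩo : IsOpen Ω)
    (hΩb : IsBounded Ω) (hε : ε ≠ 0) (hf : IsKHessianSubsol k h (Ω \ closedBall x₀ ε) f)
    (hg : IsKHessianSol k h (Ω \ closedBall x₀ ε) g)
    (hΩ : ∀ x ∈ frontier Ω ∩ closure (Ω \ closedBall x₀ ε), f x ≤ g x)
    (hsphere : ∀ x ∈ closure Ω ∩ sphere x₀ ε, f x ≤ g x) :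
    ∀ x ∈ Ω \ closedBall x₀ ε, f x ≤ g x := by
  intro x hx
  refine hf.le_of_le_frontier hk (hΩo.sdiff isClosed_closedBall) (hΩb.subset sdiff_subset) hg
    (fun y hy => ?_) x (subset_closure hx)
  exact (frontier_sdiff_closedBall_subset hε hy).elim
    (fun hyΩ => hΩ y ⟨hyΩ, frontier_subset_closure hy⟩) (hsphere y)

theorem IsKHessianSubsol.add_const_mul_log_le_of_sdiff_closedBall (hk : 1 ≤ k) (hnk : 2 * k ≤ n)
    (hΩo : IsOpen Ω) (hΩR : Ω ⊆ closedBall x₀ R) (hε : 0 < ε) (hεR : ε < R) (hL : 0 ≤ L)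
    (hψ : IsKHessianSubsol k h (Ω \ closedBall x₀ ε) ψ)
    (hv : IsKHessianSol k h (Ω \ closedBall x₀ ε) v) (hΩ : ∀ x ∈ frontier Ω, ψ x ≤ v x)
    (hsphere : ∀ x ∈ closure Ω ∩ sphere x₀ ε, ψ x - L ≤ v x) :
    ∀ x ∈ Ω \ closedBall x₀ ε,
      ψ x + L / (Real.log R - Real.log ε) * (Real.log ‖x - x₀‖ - Real.log R) ≤ v x := by
  have hgap : 0 < Real.log R - Real.log ε := sub_pos.mpr (Real.log_lt_log hε hεR)
  have hx₀ := notMem_closure_sdiff_closedBall (Ω := Ω) (x₀ := x₀) hε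
  refine (hψ.add_const_mul_log (b := Real.log R) hnk (div_nonneg hL hgap.le)
    hx₀).le_of_sdiff_closedBall hk hΩo (isBounded_closedBall.subset hΩR) hε.ne' hv
    (fun y ⟨hyΩ, hy⟩ => ?_) (fun y hy => ?_)
  · have hyR : y ∈ closedBall x₀ R :=
      closure_minimal hΩR isClosed_closedBall (frontier_subset_closure hyΩ)
    have hy₀ : 0 < ‖y - x₀‖ := norm_pos_iff.mpr (sub_ne_zero.mpr (ne_of_mem_of_not_mem hy hx₀))
    refine (add_le_of_nonpos_right ?_).trans (hΩ y hyΩ)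
    exact mul_nonpos_of_nonneg_of_nonpos (div_nonneg hL hgap.le)
      (sub_nonpos.mpr (Real.log_le_log hy₀ (mem_closedBall_iff_norm.mp hyR)))
  · rw [mem_sphere_iff_norm.mp hy.2, ← neg_sub (Real.log R), mul_neg, div_mul_cancel₀ _ hgap.ne',
      ← sub_eq_add_neg]
    exact hsphere y hy

theorem IsKHessianSol.abs_sub_le_of_sdiff_closedBall (hk : 1 ≤ k) (hnk : 2 * k ≤ n)
    (hΩo : IsOpen Ω) (hΩR : Ω ⊆ closedBall x₀ R) (hε : 0 < ε) (hεR : ε < R) (hL : 0 ≤ L)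
    (hψ : IsKHessianSol k h (Ω \ closedBall x₀ ε) ψ)
    (hv : IsKHessianSol k h (Ω \ closedBall x₀ ε) v) (hΩ : EqOn v ψ (frontier Ω))
    (hsphere : ∀ x ∈ closure Ω ∩ sphere x₀ ε, v x ≤ ψ x ∧ ψ x - L ≤ v x) :
    ∀ x ∈ Ω \ closedBall x₀ ε,
      |ψ x - v x| ≤ L / (Real.log R - Real.log ε) * (Real.log R - Real.log ‖x - x₀‖) := by
  intro x hx
  have hupper : v x ≤ ψ x :=
    hv.le_of_sdiff_closedBall hk hΩo (isBounded_closedBall.subset hΩR) hε.ne' hψ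
      (fun y hy => (hΩ hy.1).le) (fun y hy => (hsphere y hy).1) x hx
  have hlower := hψ.add_const_mul_log_le_of_sdiff_closedBall hk hnk hΩo hΩR hε hεR hL hv
    (fun y hy => (hΩ hy).ge) (fun y hy => (hsphere y hy).2) x hx
  rw [abs_of_nonneg (sub_nonneg.mpr hupper)]
  linarith

end PuncturedDomain

section Convergence

variable {n k : ℕ} {Ω : Set (Euc n)} {f ψ : Euc n → ℝ} {x₀ : Euc n} {ε M : ℝ}

theorem isKHessianSol_one_of_hessianWithin (hΩ : IsOpen Ω) (hf : ContDiffOn ℝ 2 f (closure Ω))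
    (hsol : ∀ x ∈ Ω, InGardingCone k (hessianWithin f (closure Ω) x) ∧
      sigmaMat k (hessianWithin f (closure Ω) x) = 1) : IsKHessianSol k (fun _ => 1) Ω f := by
  have hnhds {x : Euc n} (hx : x ∈ Ω) : closure Ω ∈ 𝓝 x :=
    mem_of_superset (hΩ.mem_nhds hx) subset_closure
  have hsol' (x : Euc n) (hx : x ∈ Ω) :
      InGardingCone k (hessian f x) ∧ sigmaMat k (hessian f x) = 1 := by
    simpa only [hessianWithin_of_mem_nhds f (hnhds hx)] using hsol x hx
  exact ⟨⟨hf.continuousOn, fun x hx => hf.contDiffAt (hnhds hx), fun x hx => (hsol' x hx).1,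
    fun x hx => (hsol' x hx).2.ge⟩, fun x hx => (hsol' x hx).2.le⟩

theorem IsSol22.isKHessianSol (hΩ : IsOpen Ω) (hψ : IsSol22 k Ω ψ) :
    IsKHessianSol k (fun _ => 1) Ω ψ :=
  isKHessianSol_one_of_hessianWithin hΩ (contDiffOn_infty.mp hψ.1 2) hψ.2.1

theorem IsSol.isKHessianSol (hΩ : IsOpen Ω) (hf : IsSol k Ω x₀ ε M f) :
    IsKHessianSol k (fun _ => 1) (Ω \ closedBall x₀ ε) f :=
  isKHessianSol_one_of_hessianWithin (hΩ.sdiff isClosed_closedBall) hf.1 hf.2.1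

theorem tendsto_div_log_sub_log_mul (L a b : ℝ) :
    Tendsto (fun ε => L / (a - Real.log ε) * b) (𝓝[>] 0) (𝓝 0) := by
  have hgap : Tendsto (fun ε => a - Real.log ε) (𝓝[>] 0) atTop := by
    simpa only [sub_eq_add_neg, Function.comp_def] using
      tendsto_atTop_add_const_left _ a (tendsto_neg_atBot_atTop.comp Real.tendsto_log_nhdsGT_zero)
  simpa using (hgap.const_div_atTop L).mul_const b

theorem statement19_general {h : Euc n → ℝ} {u : ℝ → Euc n → ℝ} (hk : 1 ≤ k) (hnk : 2 * k ≤ n)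
    (hΩo : IsOpen Ω) (hΩb : IsBounded Ω) (hψ : IsKHessianSol k h Ω ψ)
    (hM : ∀ x ∈ closure Ω, -M ≤ ψ x)
    (hu : ∀ᶠ ε in 𝓝[>] 0, IsKHessianSol k h (Ω \ closedBall x₀ ε) (u ε) ∧
      EqOn (u ε) ψ (frontier Ω) ∧ ∀ x ∈ sphere x₀ ε, u ε x = -M)
    {K : Set (Euc n)} (hKΩ : K ⊆ Ω) (hx₀K : x₀ ∉ closure K) :
    TendstoUniformlyOn (fun ε => extendBy (u ε) x₀ ε M) ψ (𝓝[>] 0) K := by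
  obtain ⟨R, hR₀, hR⟩ := hΩb.subset_closedBall_lt 0 x₀
  obtain ⟨ρ, hρ₀, hρ⟩ : ∃ ρ > 0, ∀ x ∈ K, ρ ≤ ‖x - x₀‖ := by
    simpa [Metric.mem_closure_iff, dist_eq_norm'] using hx₀K
  obtain ⟨B, hB⟩ := hΩb.isCompact_closure.exists_bound_of_continuousOn hψ.continuousOn
  set L := |B + M|
  have hψL (x : Euc n) (hx : x ∈ closure Ω) : ψ x - L ≤ -M := by
    linarith [le_abs_self (B + M), (Real.le_norm_self _).trans (hB x hx)]
  rw [tendstoUniformlyOn_iff]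
  intro e he
  have hsmall := (tendsto_div_log_sub_log_mul L (Real.log R) (Real.log R - Real.log ρ)).eventually
    (gt_mem_nhds he)
  filter_upwards [hu, hsmall, Ioo_mem_nhdsGT hρ₀, Ioo_mem_nhdsGT hR₀]
    with ε ⟨hsol, hbdry, hsphere⟩ hε ⟨hε₀, hερ⟩ ⟨_, hεR⟩ x hx
  have hxε : x ∈ Ω \ closedBall x₀ ε :=
    ⟨hKΩ hx, fun hxε => (mem_closedBall_iff_norm.mp hxε).not_gt (hερ.trans_le (hρ x hx))⟩
  have hrate := IsKHessianSol.abs_sub_le_of_sdiff_closedBall hk hnk hΩo hR hε₀ hεR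
    (abs_nonneg (B + M)) (hψ.mono sdiff_subset) hsol hbdry (fun y ⟨hyΩ, hyε⟩ => by
      rw [hsphere y hyε]
      exact ⟨hM y hyΩ, hψL y hyΩ⟩) x hxε
  rw [extendBy, if_neg hxε.2, Real.dist_eq]
  refine (hrate.trans (mul_le_mul_of_nonneg_left ?_ ?_)).trans_lt hε
  · exact sub_le_sub_left (Real.log_le_log hρ₀ (hρ x hx)) _
  · exact div_nonneg (abs_nonneg _) (sub_nonneg.mpr (Real.log_le_log hε₀ hεR.le))

end Convergence

/-- as `ε → 0⁺`, the extended solutions `ũ^ε` converge to `ψ`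
uniformly on compact subsets of `Ω₁ \ {x₀}` (for `n ≥ 2k`). -/
theorem statement19 {n k : ℕ} (hk : 1 ≤ k) (hnk : 2 * k ≤ n)
    (Ω₁ : Set (Euc n)) (hΩo : IsOpen Ω₁) (hΩconv : Convex ℝ Ω₁)
    (hΩb : IsBounded Ω₁) (hΩs : HasSmoothBoundary Ω₁)
    (x₀ : Euc n) (hx₀ : x₀ ∈ Ω₁)
    (ε₀ : ℝ) (hε₀ : 0 < ε₀) (hball : closedBall x₀ ε₀ ⊆ Ω₁)
    (ψ : Euc n → ℝ) (hψ : IsSol22 k Ω₁ ψ)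
    (M₁ : ℝ) (hM₁ : 0 < M₁) (hM₁ψ : ∀ x ∈ closure Ω₁, -ψ x < M₁)
    (hM₁sub : ∀ ε ∈ Ioo (0:ℝ) ε₀, ∀ x ∈ frontier Ω₁, underSol k x₀ ε M₁ x ≤ 0)
    (M : ℝ) (hM : M₁ < M)
    (u : ℝ → Euc n → ℝ) (hu : ∀ ε ∈ Ioo (0:ℝ) ε₀, IsSol k Ω₁ x₀ ε M (u ε)) :
    ∀ K : Set (Euc n), K ⊆ Ω₁ \ {x₀} → IsCompact K →
      TendstoUniformlyOn (fun ε => extendBy (u ε) x₀ ε M) ψ (𝓝[>] (0:ℝ)) K := by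
  intro K hK hKc
  refine statement19_general hk hnk hΩo hΩb (hψ.isKHessianSol hΩo)
    (fun x hx => neg_le.mp ((hM₁ψ x hx).trans hM).le) ?_ (hK.trans sdiff_subset) fun hx₀K =>
      (hK (hKc.isClosed.closure_eq ▸ hx₀K)).2 rfl
  filter_upwards [Ioo_mem_nhdsGT hε₀] with ε hε
  exact ⟨(hu ε hε).isKHessianSol hΩo,
    fun x hx => ((hu ε hε).2.2.1 x hx).trans (hψ.2.2 x hx).symm, (hu ε hε).2.2.2⟩
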